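/- There is a universal constant C such that for every square-integrable martingale difference sequence {Y_m}_{m=1}^n with max_{1≤i≤n} ‖Y_i‖_∞ < ∞, one has W_2(X_n, N) ≤ C ( n^{1/4} s_n^{-1} max_{1≤i≤n} ‖Y_i‖_∞ + ‖V_n² − 1‖_1^{1/2} ), where N is a standard normal random variable. -/

import Mathlib

open MeasureTheory ProbabilityTheory Real Filter

noncomputable section

/-- `E[|U|^q]^{1/q}`. -/
def rnorm {Ω : Type*} [MeasurableSpace Ω] (μ : Measure Ω) (q : ℝ) (U : Ω → ℝ) : ℝ :=
  (∫ ω, |U ω| ^ q ∂μ) ^ (1 / q)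

/-- Wasserstein distance of order `r` between two laws on `ℝ`, defined as the infimum of
`E[|U'-V'|^r]^{1/r}` over all couplings. -/
def wassersteinDist (r : ℝ) (μ ν : Measure ℝ) : ℝ :=
  sInf { d : ℝ | ∃ cpl : Measure (ℝ × ℝ), IsProbabilityMeasure cpl ∧
    cpl.map Prod.fst = μ ∧ cpl.map Prod.snd = ν ∧
    d = (∫ p, |p.1 - p.2| ^ r ∂cpl) ^ (1 / r) }

/-- The standard normal law on `ℝ`. -/
def stdGaussian : Measure ℝ := gaussianReal 0 1

/-- `{Y_i}_{i=1}^n` is a square-integrable martingale difference sequence w.r.t. `F`. -/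
structure IsMDS {Ω : Type*} [m0 : MeasurableSpace Ω] (μ : Measure Ω)
    (F : ℕ → MeasurableSpace Ω) (n : ℕ) (Y : ℕ → Ω → ℝ) : Prop where
  protected le : ∀ i, F i ≤ m0
  protected mono : Monotone F
  protected adapted : ∀ i, 1 ≤ i → i ≤ n → Measurable[F i] (Y i)
  protected memL2 : ∀ i, 1 ≤ i → i ≤ n → MemLp (Y i) 2 μ
  protected mdiff : ∀ i, 1 ≤ i → i ≤ n → μ[Y i | F (i - 1)] =ᵐ[μ] 0

/-- An N-function. -/
def IsNFunction (φ : ℝ → ℝ) : Prop :=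
  ConvexOn ℝ (Set.Ici 0) φ ∧ (∀ x, 0 ≤ x → 0 ≤ φ x) ∧
  Tendsto (fun x => φ x / x) (nhdsWithin 0 (Set.Ioi 0)) (nhds 0) ∧
  Tendsto (fun x => φ x / x) atTop atTop ∧
  (∀ x, 0 < x → 0 < φ x)

/-- `φ₁ ≼ φ₂` : the ratio `φ₂/φ₁` is non-decreasing on `(0,∞)`. -/
def Dominates (φ₁ φ₂ : ℝ → ℝ) : Prop :=
  MonotoneOn (fun x => φ₂ x / φ₁ x) (Set.Ioi (0 : ℝ))

/-- Generalized inverse of `φ` on `[0,∞)`. -/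
def ninv (φ : ℝ → ℝ) (y : ℝ) : ℝ := sInf {x : ℝ | 0 ≤ x ∧ y ≤ φ x}

/-- Orlicz norm of the finite sequence `{Y_i}_{i=1}^n`. -/
def orliczSeqNorm {Ω : Type*} [MeasurableSpace Ω] (μ : Measure Ω) (φ : ℝ → ℝ)
    (n : ℕ) (Y : ℕ → Ω → ℝ) : ℝ :=
  sInf {c : ℝ | 0 < c ∧ (1 / n : ℝ) * ∑ i ∈ Finset.Icc 1 n, ∫ ω, φ (|Y i ω| / c) ∂μ ≤ 1}


open scoped ENNReal

/-- Zolotarev's ideal distance of integer order `r`: the supremum of `E f(U) - E f(V)` over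
`(r-1)`-times differentiable `f` whose `(r-1)`-st derivative is `1`-Lipschitz. -/
def zolotarev {Ω : Type*} [MeasurableSpace Ω] (r : ℕ) (μ : Measure Ω) (U : Ω → ℝ)
    (ν : Measure ℝ) : ℝ :=
  sSup { d : ℝ | ∃ f : ℝ → ℝ, ContDiff ℝ (r - 1 : ℕ) f ∧
    LipschitzWith 1 (iteratedDeriv (r - 1) f) ∧
    d = (∫ ω, f (U ω) ∂μ) - ∫ x, f x ∂ν }

/-- The Fenchel–Legendre transform of `φ` (with the supremum over `y ≥ 0`). -/
def fenchel (φ : ℝ → ℝ) (x : ℝ) : ℝ := sSup ((fun y => x * y - φ y) '' Set.Ici 0)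

/-- `C_φ = sup_{x,y>0} (φ⁻¹(x)φ_*⁻¹(x)/x) / (φ⁻¹(y)φ_*⁻¹(y)/y)`. -/
def nratioConst (φ : ℝ → ℝ) : ℝ :=
  sSup { r : ℝ | ∃ x > (0:ℝ), ∃ y > (0:ℝ),
    r = (ninv φ x * ninv (fenchel φ) x / x) / (ninv φ y * ninv (fenchel φ) y / y) }

/-- `λ_m = ( Σ_{i=m+1}^n σ_i²(Y) + β² s_n² )^{1/2}`. -/
def lamCV {Ω : Type*} [MeasurableSpace Ω] (μ : Measure Ω) (F : ℕ → MeasurableSpace Ω)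
    (n : ℕ) (Y : ℕ → Ω → ℝ) (sn β : ℝ) (m : ℕ) (ω : Ω) : ℝ :=
  Real.sqrt ((∑ j ∈ Finset.Icc (m + 1) n, (μ[fun ω' => Y j ω' ^ 2 | F (j - 1)]) ω)
    + β ^ 2 * sn ^ 2)

/-!
Let `T` be the monotone map transporting the standard Gaussian to the law of `X_n`. Since
`(y + T y) / 2 ↦ 2 (T y - y)` is `4`-Lipschitz, its primitive `f` satisfies
`(T y - y)² ≤ f (T y) - f y`, so `W₂²` is at most the supremum of `E f(X_n) - E f(N)` over test
functions with a `4`-Lipschitz derivative.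

That difference is estimated by Lindeberg's method, replacing the increments one at a time by
Gaussians whose variance is the conditional one: step `k` uses the test function smoothed by the
heat flow for the variance still to be spent plus `M²`, where `M` bounds the increments. The first
and second order terms have predictable coefficients and vanish in mean. The third order errors are
of order `M a / √τ`, where the smoothing time drops from `τ + a` to `τ`, so they telescope to
`M √(s_n² + M²)`, of order `√n M²`; the square root turns this into `n^{1/4} M`.
-/

open scoped NNReal

/-! ### Taylor estimates -/

lemma norm_sub_le_of_norm_deriv_le_pow {E : Type*} [NormedAddCommGroup E] [NormedSpace ℝ E]
    {g g' : ℝ → E} {x C : ℝ} {n : ℕ} (hg : ∀ s, HasDerivAt g (g' s) s)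
    (hC : ∀ s, ‖g' s‖ ≤ C * |s - x| ^ n) (v : ℝ) :
    ‖g v - g x‖ ≤ C / (n + 1) * |v - x| ^ (n + 1) := by
  have hpath (θ : ℝ) : HasDerivAt (fun θ ↦ g (x + θ * (v - x)) - g x)
      ((v - x) • g' (x + θ * (v - x))) θ := by
    have hinner : HasDerivAt (fun θ ↦ x + θ * (v - x)) (v - x) θ := by
      simpa using ((hasDerivAt_id θ).mul_const (v - x)).const_add x
    exact ((hg _).scomp θ hinner).sub_const _
  have hbound (θ : ℝ) : HasDerivAt (fun θ ↦ C / (n + 1) * |v - x| ^ (n + 1) * θ ^ (n + 1))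
      (C * |v - x| ^ (n + 1) * θ ^ n) θ := by
    refine ((hasDerivAt_pow (n + 1) θ).const_mul _).congr_deriv ?_
    push_cast
    field_simp
  have hle (θ : ℝ) (hθ : θ ∈ Set.Ico (0 : ℝ) 1) :
      ‖(v - x) • g' (x + θ * (v - x))‖ ≤ C * |v - x| ^ (n + 1) * θ ^ n :=
    calc ‖(v - x) • g' (x + θ * (v - x))‖
        ≤ |v - x| * (C * |x + θ * (v - x) - x| ^ n) := by
          rw [norm_smul, Real.norm_eq_abs]
          gcongr
          exact hC _
      _ = C * |v - x| ^ (n + 1) * θ ^ n := by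
          rw [add_sub_cancel_left, abs_mul, abs_of_nonneg hθ.1]
          ring
  have := image_norm_le_of_norm_deriv_right_le_deriv_boundary (a := 0) (b := 1)
    (fun θ _ ↦ (hpath θ).continuousAt.continuousWithinAt) (fun θ _ ↦ (hpath θ).hasDerivWithinAt)
    (by simp) hbound hle (Set.right_mem_Icc.2 zero_le_one)
  simpa using this

section Taylor

variable {f f' : ℝ → ℝ} {K : ℝ≥0}

lemma abs_sub_taylor_one_le (hf : ∀ x, HasDerivAt f (f' x) x) (hK : LipschitzWith K f')
    (x v : ℝ) : |f v - f x - f' x * (v - x)| ≤ K / 2 * (v - x) ^ 2 := by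
  have hrem (s : ℝ) : HasDerivAt (fun s ↦ f s - f' x * (s - x)) (f' s - f' x) s := by
    simpa using (hf s).fun_sub (((hasDerivAt_id s).sub_const x).const_mul (f' x))
  have := norm_sub_le_of_norm_deriv_le_pow (n := 1) hrem
    (fun s ↦ by simpa [Real.dist_eq] using hK.dist_le_mul s x) v
  norm_num [sub_right_comm] at this
  exact this

lemma abs_sub_taylor_two_le {f'' : ℝ → ℝ} (hf : ∀ x, HasDerivAt f (f' x) x)
    (hf' : ∀ x, HasDerivAt f' (f'' x) x) (hK : LipschitzWith K f'') (x y : ℝ) :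
    |f (x + y) - f x - y * f' x - y ^ 2 / 2 * f'' x| ≤ K / 6 * |y| ^ 3 := by
  have hrem (s : ℝ) : HasDerivAt (fun s ↦ f s - f' x * (s - x) - f'' x * (s - x) ^ 2 / 2)
      (f' s - f' x - f'' x * (s - x)) s := by
    have hid := (hasDerivAt_id s).sub_const x
    refine (((hf s).fun_sub (hid.const_mul (f' x))).fun_sub
      (((hid.fun_pow 2).const_mul (f'' x)).div_const 2)).congr_deriv ?_
    simp only [mul_one, Nat.cast_ofNat, id_eq, Nat.add_one_sub_one, pow_one, sub_right_inj]
    ring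
  have := norm_sub_le_of_norm_deriv_le_pow (n := 2) hrem
    (fun s ↦ by simpa using abs_sub_taylor_one_le hf' hK x s) (x + y)
  norm_num at this
  convert this using 2 <;> ring

end Taylor

/-! ### Integrability of functions with a Lipschitz derivative -/

section Integrability

variable {Ω : Type*} [MeasurableSpace Ω] {μ : Measure Ω} [IsFiniteMeasure μ] {X : Ω → ℝ}
  {f : ℝ → ℝ} {K : ℝ≥0}

lemma memLp_comp_of_lipschitzWith {p : ℝ≥0∞} (hf : LipschitzWith K f) (hX : MemLp X p μ) :
    MemLp (fun ω ↦ f (X ω)) p μ := by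
  have hsub : LipschitzWith K (fun x ↦ f x - f 0) :=
    .of_dist_le_mul fun x y ↦ by simpa using hf.dist_le_mul x y
  convert (hsub.comp_memLp (by simp) hX).add (memLp_const (f 0)) using 2
  simp

lemma integrable_comp_of_lipschitzWith_deriv (hf : Differentiable ℝ f)
    (hK : LipschitzWith K (deriv f)) (hX : MemLp X 2 μ) : Integrable (fun ω ↦ f (X ω)) μ := by
  have hdom : Integrable (fun ω ↦ |f 0| + |deriv f 0| * |X ω| + K / 2 * X ω ^ 2) μ :=
    ((integrable_const _).add ((hX.integrable one_le_two).abs.const_mul _)).add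
      (hX.integrable_sq.const_mul _)
  refine hdom.mono' (hf.continuous.comp_aestronglyMeasurable hX.aestronglyMeasurable)
    (.of_forall fun ω ↦ ?_)
  have htaylor := abs_sub_taylor_one_le (fun x ↦ (hf x).hasDerivAt) hK 0 (X ω)
  calc ‖f (X ω)‖ = ‖f 0 + deriv f 0 * X ω + (f (X ω) - f 0 - deriv f 0 * (X ω - 0))‖ := by ring_nf
    _ ≤ ‖f 0‖ + ‖deriv f 0 * X ω‖ + ‖f (X ω) - f 0 - deriv f 0 * (X ω - 0)‖ := norm_add₃_le
    _ ≤ |f 0| + |deriv f 0| * |X ω| + K / 2 * X ω ^ 2 := by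
      simpa [abs_mul] using htaylor

end Integrability

/-! ### Monotone transport on the line -/

section Transport

variable {ν : Measure ℝ} [IsProbabilityMeasure ν]

lemma strictMono_cdf [ν.IsOpenPosMeasure] : StrictMono (cdf ν) := by
  intro x y hxy
  have hpos : 0 < ν.real (Set.Ioc x y) :=
    ENNReal.toReal_pos (((Measure.measure_Ioo_pos ν).2 hxy).trans_le
      (measure_mono Set.Ioo_subset_Ioc_self)).ne' (measure_ne_top _ _)
  rw [cdf_eq_real, cdf_eq_real, ← Set.Iic_union_Ioc_eq_Iic hxy.le,
    measureReal_union (Set.Iic_disjoint_Ioc le_rfl) measurableSet_Ioc]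
  linarith

lemma cdf_pos [ν.IsOpenPosMeasure] (x : ℝ) : 0 < cdf ν x :=
  (cdf_nonneg ν (x - 1)).trans_lt (strictMono_cdf (sub_one_lt x))

lemma cdf_lt_one [ν.IsOpenPosMeasure] (x : ℝ) : cdf ν x < 1 :=
  (strictMono_cdf (lt_add_one x)).trans_le (cdf_le_one ν (x + 1))

lemma continuous_cdf [NullSingletonClass ν] : Continuous (cdf ν) := by
  refine continuous_iff_continuousAt.2 fun x ↦ continuousAt_iff_continuous_left'_right'.2
    ⟨?_, ((cdf ν).right_continuous x).mono Set.Ioi_subset_Ici_self⟩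
  rw [(monotone_cdf ν).continuousWithinAt_Iio_iff_leftLim_eq]
  have hjump := (cdf ν).measure_singleton x
  rw [measure_cdf, measure_singleton] at hjump
  exact ((monotone_cdf ν).leftLim_le le_rfl).antisymm
    (sub_nonpos.1 (ENNReal.ofReal_eq_zero.1 hjump.symm))

lemma measureReal_cdf_le [NullSingletonClass ν] [ν.IsOpenPosMeasure] {p : ℝ} (hp₀ : 0 ≤ p)
    (hp₁ : p ≤ 1) : ν.real {y | cdf ν y ≤ p} = p := by
  rcases hp₀.eq_or_lt with rfl | hp₀
  · simp [(cdf_pos _).not_ge]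
  rcases hp₁.eq_or_lt with rfl | hp₁
  · simp [cdf_le_one]
  obtain ⟨y, rfl⟩ : p ∈ Set.range (cdf ν) :=
    mem_range_of_exists_le_of_exists_ge continuous_cdf
      ((tendsto_cdf_atBot ν).eventually (ge_mem_nhds hp₀)).exists
      ((tendsto_cdf_atTop ν).eventually (le_mem_nhds hp₁)).exists
  simp only [strictMono_cdf.le_iff_le]
  exact (cdf_eq_real ν y).symm

variable (P : Measure ℝ)

/-- The lower quantile function of `P`, whose composition with the cdf of `ν` transports `ν` to `P`.
Only meaningful for `0 < p < 1`: otherwise the set may be empty or unbounded below. -/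
def lowerQuantile (p : ℝ) : ℝ := sInf {x | p ≤ cdf P x}

variable {P} {p q : ℝ}

lemma nonempty_le_cdf (hp : p < 1) : {x | p ≤ cdf P x}.Nonempty :=
  ((tendsto_cdf_atTop P).eventually (le_mem_nhds hp)).exists

lemma bddBelow_le_cdf (hp : 0 < p) : BddBelow {x | p ≤ cdf P x} := by
  obtain ⟨b, hb⟩ := ((tendsto_cdf_atBot P).eventually (gt_mem_nhds hp)).exists
  exact ⟨b, fun x hx ↦ le_of_not_gt fun hxb ↦
    (hx.trans (monotone_cdf P hxb.le)).not_gt hb⟩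

lemma lowerQuantile_mono (hp : 0 < p) (hpq : p ≤ q) (hq : q < 1) :
    lowerQuantile P p ≤ lowerQuantile P q :=
  csInf_le_csInf (bddBelow_le_cdf hp) (nonempty_le_cdf hq) fun _ hx ↦ hpq.trans hx

lemma lowerQuantile_le_iff (hp₀ : 0 < p) (hp₁ : p < 1) (x : ℝ) :
    lowerQuantile P p ≤ x ↔ p ≤ cdf P x := by
  refine ⟨fun h ↦ ?_, fun h ↦ csInf_le (bddBelow_le_cdf hp₀) h⟩
  have hright : Tendsto (cdf P) (nhdsWithin x (Set.Ioi x)) (nhds (cdf P x)) :=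
    ((cdf P).right_continuous x).mono Set.Ioi_subset_Ici_self
  refine ge_of_tendsto hright ?_
  filter_upwards [self_mem_nhdsWithin] with z hz
  obtain ⟨w, hw, hwz⟩ := exists_lt_of_csInf_lt (nonempty_le_cdf hp₁) (h.trans_lt hz)
  exact hw.trans (monotone_cdf P hwz.le)

lemma exists_monotone_map_eq [NullSingletonClass ν] [ν.IsOpenPosMeasure] (P : Measure ℝ)
    [IsProbabilityMeasure P] : ∃ T : ℝ → ℝ, Monotone T ∧ ν.map T = P := by
  have hT : Monotone (fun y ↦ lowerQuantile P (cdf ν y)) := fun y z hyz ↦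
    lowerQuantile_mono (cdf_pos y) (monotone_cdf ν hyz) (cdf_lt_one z)
  refine ⟨_, hT, ?_⟩
  have := Measure.isProbabilityMeasure_map (μ := ν) hT.measurable.aemeasurable
  refine Measure.eq_of_cdf _ _ (StieltjesFunction.ext fun x ↦ ?_)
  rw [cdf_eq_real, map_measureReal_apply hT.measurable measurableSet_Iic]
  simp only [Set.preimage, Set.mem_Iic, lowerQuantile_le_iff (cdf_pos _) (cdf_lt_one _)]
  exact measureReal_cdf_le (cdf_nonneg P x) (cdf_le_one P x)

end Transport

/-! ### Bounding the quadratic transport cost by test functions -/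

lemma lipschitzOnWith_displacement_of_monotone {T φ : ℝ → ℝ} (hT : Monotone T)
    (hφ : ∀ y, φ ((y + T y) / 2) = 2 * (T y - y)) :
    LipschitzOnWith 4 φ (Set.range fun y ↦ (y + T y) / 2) := by
  refine .of_dist_le_mul ?_
  rintro _ ⟨y, rfl⟩ _ ⟨z, rfl⟩
  simp only [hφ, Real.dist_eq, NNReal.coe_ofNat]
  wlog hyz : y ≤ z generalizing y z
  · rw [abs_sub_comm, abs_sub_comm ((y + T y) / 2)]
    exact this z y (le_of_not_ge hyz)
  have := hT hyz
  rw [abs_sub_comm ((y + T y) / 2), abs_of_nonneg (a := (z + T z) / 2 - _) (by linarith), abs_le]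
  constructor <;> linarith

lemma exists_sq_le_sub_of_monotone {T : ℝ → ℝ} (hT : Monotone T) :
    ∃ f : ℝ → ℝ, Differentiable ℝ f ∧ LipschitzWith 4 (deriv f) ∧
      ∀ y, (T y - y) ^ 2 ≤ f (T y) - f y := by
  have hmid : StrictMono fun y ↦ (y + T y) / 2 := fun y z hyz ↦ by
    linarith [hT hyz.le]
  obtain ⟨φ, hφ, hφmid⟩ := (lipschitzOnWith_displacement_of_monotone
    (φ := Function.extend (fun y ↦ (y + T y) / 2) (fun y ↦ 2 * (T y - y)) 0) hT
    (hmid.injective.extend_apply _ _)).extend_real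
  have hderiv (x : ℝ) : HasDerivAt (fun x ↦ ∫ r in (0 : ℝ)..x, φ r) (φ x) x :=
    intervalIntegral.integral_hasDerivAt_right (hφ.continuous.intervalIntegrable _ _)
      (hφ.continuous.stronglyMeasurableAtFilter _ _) hφ.continuous.continuousAt
  refine ⟨_, fun x ↦ (hderiv x).differentiableAt, by rwa [deriv_eq hderiv], fun y ↦ ?_⟩
  have hslope : φ ((y + T y) / 2) = 2 * (T y - y) := by
    rw [← hφmid ⟨y, rfl⟩, hmid.injective.extend_apply]
  have hright := (abs_le.1 (abs_sub_taylor_one_le hderiv hφ ((y + T y) / 2) (T y))).1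
  have hleft := (abs_le.1 (abs_sub_taylor_one_le hderiv hφ ((y + T y) / 2) y)).2
  rw [hslope] at hright hleft
  norm_num at hright hleft
  nlinarith

lemma wassersteinDist_le_of_map {Ω : Type*} [MeasurableSpace Ω] {μ : Measure Ω}
    [IsProbabilityMeasure μ] {U V : Ω → ℝ} {r : ℝ} (hU : Measurable U) (hV : Measurable V) :
    wassersteinDist r (μ.map U) (μ.map V) ≤ (∫ ω, |U ω - V ω| ^ r ∂μ) ^ (1 / r) := by
  have hUV : Measurable fun ω ↦ (U ω, V ω) := hU.prodMk hV
  refine csInf_le ⟨0, ?_⟩ ⟨μ.map fun ω ↦ (U ω, V ω),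
    Measure.isProbabilityMeasure_map hUV.aemeasurable, Measure.map_map measurable_fst hUV,
    Measure.map_map measurable_snd hUV, ?_⟩
  · rintro _ ⟨_, -, -, -, rfl⟩
    positivity
  · rw [integral_map hUV.aemeasurable (Measurable.aestronglyMeasurable (by fun_prop))]

lemma wassersteinDist_two_le_sqrt {P ν : Measure ℝ} [IsProbabilityMeasure P]
    [IsProbabilityMeasure ν] [NullSingletonClass ν] [ν.IsOpenPosMeasure] (hP : MemLp id 2 P)
    (hν : MemLp id 2 ν) {A : ℝ}
    (hA : ∀ f : ℝ → ℝ, Differentiable ℝ f → LipschitzWith 4 (deriv f) →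
      ∫ x, f x ∂P - ∫ x, f x ∂ν ≤ A) :
    wassersteinDist 2 P ν ≤ √A := by
  obtain ⟨T, hT, rfl⟩ := exists_monotone_map_eq (ν := ν) P
  obtain ⟨f, hf, hfK, hcost⟩ := exists_sq_le_sub_of_monotone hT
  have hTm := hT.measurable
  have hfP : Integrable (fun y ↦ f (T y)) ν := integrable_comp_of_lipschitzWith_deriv hf hfK
    ((memLp_map_measure_iff hP.aestronglyMeasurable hTm.aemeasurable).1 hP)
  have hfν : Integrable f ν := integrable_comp_of_lipschitzWith_deriv hf hfK hν
  have hle : ∫ y, (T y - y) ^ 2 ∂ν ≤ A :=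
    calc ∫ y, (T y - y) ^ 2 ∂ν ≤ ∫ y, (f (T y) - f y) ∂ν :=
          integral_mono_of_nonneg (.of_forall fun _ ↦ sq_nonneg _) (hfP.sub hfν)
            (.of_forall hcost)
      _ = ∫ x, f x ∂ν.map T - ∫ y, f y ∂ν := by
          rw [integral_sub hfP hfν, integral_map hTm.aemeasurable
            hf.continuous.aestronglyMeasurable]
      _ ≤ A := hA f hf hfK
  calc wassersteinDist 2 (ν.map T) ν = wassersteinDist 2 (ν.map T) (ν.map id) := by
        rw [Measure.map_id]
    _ ≤ (∫ y, |T y - id y| ^ (2 : ℝ) ∂ν) ^ (1 / 2 : ℝ) :=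
        wassersteinDist_le_of_map hTm measurable_id
    _ = √(∫ y, (T y - y) ^ 2 ∂ν) := by
        simp [Real.sqrt_eq_rpow]
    _ ≤ √A := Real.sqrt_le_sqrt hle

/-! ### The standard Gaussian measure -/

local notation "γ" => gaussianReal 0 1

section Gaussian

lemma isOpenPosMeasure_stdGaussian : Measure.IsOpenPosMeasure γ :=
  (gaussianReal_absolutelyContinuous' 0 one_ne_zero).isOpenPosMeasure

lemma integrable_pow_stdGaussian (n : ℕ) : Integrable (fun z ↦ z ^ n) γ := by
  rw [← integrable_norm_iff (by fun_prop)]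
  simpa using (memLp_id_gaussianReal' n (ENNReal.natCast_ne_top n)).integrable_norm_pow'

lemma memLp_pow_stdGaussian (n : ℕ) : MemLp (fun z ↦ z ^ n) 2 γ := by
  rw [memLp_two_iff_integrable_sq (by fun_prop)]
  simpa [← pow_mul] using integrable_pow_stdGaussian (n * 2)

lemma integral_sq_stdGaussian : ∫ z, z ^ 2 ∂γ = 1 := by
  have := variance_fun_id_gaussianReal (μ := 0) (v := 1)
  rw [variance_eq_integral (by fun_prop)] at this
  simpa using this

lemma integral_abs_stdGaussian_le : ∫ z, |z| ∂γ ≤ 1 := by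
  have hz := integrable_pow_stdGaussian 2
  calc ∫ z, |z| ∂γ ≤ ∫ z, (z ^ 2 + 1) / 2 ∂γ := by
        refine integral_mono_of_nonneg (.of_forall fun z ↦ abs_nonneg z)
          ((hz.add (integrable_const 1)).div_const 2) (.of_forall fun z ↦ ?_)
        simp only
        nlinarith [sq_nonneg (|z| - 1), sq_abs z]
    _ = 1 := by
        rw [integral_div, integral_add hz (integrable_const 1), integral_sq_stdGaussian]
        norm_num

lemma integral_comp_add_stdGaussian (f : ℝ → ℝ) (a : ℝ) :
    ∫ z, f (z + a) ∂γ = ∫ z, f z * exp (a * z - a ^ 2 / 2) ∂γ := by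
  rw [integral_gaussianReal_eq_integral_smul one_ne_zero,
    integral_gaussianReal_eq_integral_smul one_ne_zero, ← integral_sub_right_eq_self _ a]
  congr with z
  simp only [gaussianPDFReal, smul_eq_mul, sub_add_cancel]
  rw [mul_comm (f z), ← mul_assoc, mul_assoc _ (exp _) (exp _), ← exp_add]
  congr 3
  simp only [sub_zero, NNReal.coe_one, mul_one]
  ring

lemma memLp_exp_mul_abs_stdGaussian (b : ℝ) : MemLp (fun z ↦ exp (b * |z|)) 2 γ := by
  rw [memLp_two_iff_integrable_sq (by fun_prop)]
  simp only [← exp_nat_mul, ← mul_assoc]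
  exact integrable_exp_mul_abs (integrable_exp_mul_gaussianReal _)
    (integrable_exp_mul_gaussianReal _)

lemma abs_deriv_exp_tilt_le {a : ℝ} (ha : |a| ≤ 1) (z : ℝ) :
    |exp (a * z - a ^ 2 / 2) * (z - a)| ≤ exp (2 * |z|) := by
  have hexp : a * z - a ^ 2 / 2 ≤ |z| := by
    nlinarith [abs_mul a z, le_abs_self (a * z), abs_nonneg z, sq_nonneg a]
  have hfactor : |z - a| ≤ exp |z| := by
    linarith [abs_sub z a, add_one_le_exp |z|]
  calc |exp (a * z - a ^ 2 / 2) * (z - a)| = exp (a * z - a ^ 2 / 2) * |z - a| := by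
        rw [abs_mul, abs_exp]
    _ ≤ exp |z| * exp |z| := by gcongr
    _ = exp (2 * |z|) := by rw [← exp_add, two_mul]

lemma hasDerivAt_integral_comp_add_stdGaussian {f : ℝ → ℝ} (hf : MemLp f 2 γ) :
    HasDerivAt (fun a ↦ ∫ z, f (z + a) ∂γ) (∫ z, f z * z ∂γ) 0 := by
  simp only [integral_comp_add_stdGaussian]
  have htilt (a z : ℝ) : HasDerivAt (fun a ↦ f z * exp (a * z - a ^ 2 / 2))
      (f z * (exp (a * z - a ^ 2 / 2) * (z - a))) a := by
    refine ((((hasDerivAt_id a).mul_const z).sub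
      (((hasDerivAt_id a).fun_pow 2).div_const 2)).exp.const_mul (f z)).congr_deriv ?_
    simp
  have hdom := hf.abs.integrable_mul (memLp_exp_mul_abs_stdGaussian 2)
  have hmeas := hf.aestronglyMeasurable
  refine ((hasDerivAt_integral_of_dominated_loc_of_deriv_le
    (F := fun a z ↦ f z * exp (a * z - a ^ 2 / 2))
    (F' := fun a z ↦ f z * (exp (a * z - a ^ 2 / 2) * (z - a))) (Metric.ball_mem_nhds 0 one_pos)
    (.of_forall fun a ↦ hmeas.mul (by fun_prop)) (by simpa using hf.integrable one_le_two)
    (hmeas.mul (by fun_prop)) (.of_forall fun z a ha ↦ ?_) hdom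
    (.of_forall fun z a _ ↦ htilt a z)).2).congr_deriv (by simp)
  rw [norm_mul]
  exact mul_le_mul_of_nonneg_left (abs_deriv_exp_tilt_le (mem_ball_zero_iff.1 ha).le z)
    (norm_nonneg _)

lemma integral_pow_four_stdGaussian : ∫ z, z ^ 4 ∂γ = 3 := by
  have hstein := hasDerivAt_integral_comp_add_stdGaussian (memLp_pow_stdGaussian 3)
  have hexpand (a : ℝ) : ∫ z, (z + a) ^ 3 ∂γ = ∫ z, z ^ 3 ∂γ + 3 * a + a ^ 3 := by
    have h₁ : Integrable (fun z ↦ 3 * a ^ 2 * z) γ := by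
      simpa using (integrable_pow_stdGaussian 1).const_mul (3 * a ^ 2)
    have h₂ := (integrable_pow_stdGaussian 2).const_mul (3 * a)
    have h₃ := integrable_pow_stdGaussian 3
    calc ∫ z, (z + a) ^ 3 ∂γ = ∫ z, (z ^ 3 + 3 * a * z ^ 2 + 3 * a ^ 2 * z + a ^ 3) ∂γ := by
          congr with z
          ring
      _ = ∫ z, z ^ 3 ∂γ + 3 * a + a ^ 3 := by
          rw [integral_add (by fun_prop) (by fun_prop), integral_add (by fun_prop) h₁,
            integral_add h₃ h₂, integral_const_mul, integral_const_mul, integral_sq_stdGaussian,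
            integral_id_gaussianReal]
          simp
  have hpoly : HasDerivAt (fun a : ℝ ↦ ∫ z, z ^ 3 ∂γ + 3 * a + a ^ 3) 3 0 := by
    simpa using (((hasDerivAt_id (0 : ℝ)).const_mul 3).const_add _).fun_add (hasDerivAt_pow 3 0)
  simp only [hexpand, ← pow_succ] at hstein
  exact hstein.unique hpoly

lemma integral_abs_pow_three_stdGaussian_le : ∫ z, |z| ^ 3 ∂γ ≤ 2 := by
  have h₂ := integrable_pow_stdGaussian 2
  have h₄ := integrable_pow_stdGaussian 4
  calc ∫ z, |z| ^ 3 ∂γ ≤ ∫ z, (z ^ 2 + z ^ 4) / 2 ∂γ := by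
        refine integral_mono_of_nonneg (.of_forall fun z ↦ by positivity)
          ((h₂.add h₄).div_const 2) (.of_forall fun z ↦ ?_)
        have : z ^ 4 = |z| ^ 4 := by rw [← abs_pow, abs_of_nonneg (by positivity)]
        simp only [this]
        nlinarith [mul_nonneg (sq_nonneg |z|) (sq_nonneg (|z| - 1)), sq_abs z]
    _ = 2 := by
        rw [integral_div, integral_add h₂ h₄, integral_sq_stdGaussian,
          integral_pow_four_stdGaussian]
        norm_num

end Gaussian

/-! ### Gaussian smoothing -/

/-- The heat flow `E f(x + √t Z)` with `Z` standard Gaussian. It is constant in `t` for `t ≤ 0`, as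
`√t = 0` there. -/
def heatFlow (f : ℝ → ℝ) (t x : ℝ) : ℝ := ∫ z, f (x + √t * z) ∂γ

/-- The space derivative of `heatFlow g t`, in the form `t^{-1/2} E[g(x + √t Z) Z]` which does not
differentiate `g`. It has the junk value `0` for `t ≤ 0`. -/
def heatGrad (g : ℝ → ℝ) (t x : ℝ) : ℝ := (∫ z, g (x + √t * z) * z ∂γ) / √t

section Smoothing

variable {f g : ℝ → ℝ} {K : ℝ≥0} {t x : ℝ}

lemma memLp_affine_stdGaussian (x c : ℝ) : MemLp (fun z ↦ x + c * z) 2 γ :=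
  (memLp_const x).add ((memLp_id_gaussianReal' 2 ENNReal.ofNat_ne_top).const_mul c)

lemma memLp_comp_affine_stdGaussian (hg : LipschitzWith K g) (x c : ℝ) :
    MemLp (fun z ↦ g (x + c * z)) 2 γ :=
  memLp_comp_of_lipschitzWith hg (memLp_affine_stdGaussian x c)

lemma integrable_comp_affine_stdGaussian (hf : Differentiable ℝ f)
    (hK : LipschitzWith K (deriv f)) (x c : ℝ) : Integrable (fun z ↦ f (x + c * z)) γ :=
  integrable_comp_of_lipschitzWith_deriv hf hK (memLp_affine_stdGaussian x c)

lemma measurable_heatFlow (hf : Measurable f) :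
    Measurable fun p : ℝ × ℝ ↦ heatFlow f p.1 p.2 := by
  have : Measurable fun p : (ℝ × ℝ) × ℝ ↦ f (p.1.2 + √p.1.1 * p.2) := by fun_prop
  exact this.stronglyMeasurable.integral_prod_right'.measurable

lemma measurable_heatGrad (hg : Measurable g) :
    Measurable fun p : ℝ × ℝ ↦ heatGrad g p.1 p.2 := by
  have : Measurable fun p : (ℝ × ℝ) × ℝ ↦ g (p.1.2 + √p.1.1 * p.2) * p.2 := by fun_prop
  exact this.stronglyMeasurable.integral_prod_right'.measurable.div (by fun_prop)

-- The terms in `b` and `d` are free because `z` and `z ^ 2 - 1` have Gaussian mean zero.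
lemma abs_integral_stdGaussian_sub_le {φ : ℝ → ℝ} (hφ : Integrable φ γ) {c b d C : ℝ} {n : ℕ}
    (h : ∀ z, |φ z - c - b * z - d * (z ^ 2 - 1)| ≤ C * |z| ^ n) :
    |∫ z, φ z ∂γ - c| ≤ C * ∫ z, |z| ^ n ∂γ := by
  have hdom : Integrable (fun z ↦ C * |z| ^ n) γ := by
    simpa using (integrable_pow_stdGaussian n).abs.const_mul C
  have hlin : Integrable (fun z ↦ b * z) γ := by
    simpa using (integrable_pow_stdGaussian 1).const_mul b
  have hsq := integrable_pow_stdGaussian 2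
  calc |∫ z, φ z ∂γ - c| = ‖∫ z, (φ z - c - b * z - d * (z ^ 2 - 1)) ∂γ‖ := by
        rw [integral_sub (by fun_prop) (by fun_prop), integral_sub (by fun_prop) hlin,
          integral_sub hφ (integrable_const c), integral_const_mul, integral_const_mul,
          integral_sub hsq (integrable_const 1), integral_sq_stdGaussian,
          integral_id_gaussianReal]
        simp
    _ ≤ ∫ z, C * |z| ^ n ∂γ := norm_integral_le_of_norm_le hdom (.of_forall h)
    _ = C * ∫ z, |z| ^ n ∂γ := integral_const_mul _ _

lemma lipschitzWith_heatFlow (hg : LipschitzWith K g) (t : ℝ) :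
    LipschitzWith K (heatFlow g t) := by
  refine .of_dist_le_mul fun x y ↦ ?_
  have hint (x : ℝ) := (memLp_comp_affine_stdGaussian hg x √t).integrable one_le_two
  rw [dist_eq_norm, heatFlow, heatFlow, ← integral_sub (hint x) (hint y)]
  refine (norm_integral_le_of_norm_le_const (C := K * dist x y) (.of_forall fun z ↦ ?_)).trans
    (by simp)
  simpa [dist_eq_norm] using hg.dist_le_mul (x + √t * z) (y + √t * z)

lemma hasDerivAt_heatFlow (hf : Differentiable ℝ f) (hK : LipschitzWith K (deriv f)) (t x : ℝ) :
    HasDerivAt (heatFlow f t) (heatFlow (deriv f) t x) x := by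
  have hint (x : ℝ) := integrable_comp_affine_stdGaussian hf hK x √t
  have hint' := (memLp_comp_affine_stdGaussian hK x √t).integrable one_le_two
  refine (hasDerivAt_integral_of_dominated_loc_of_deriv_le (Metric.ball_mem_nhds x one_pos)
    (.of_forall fun y ↦ (hint y).aestronglyMeasurable) (hint x) hint'.aestronglyMeasurable
    (.of_forall fun z y hy ↦ ?_) (hint'.norm.add (integrable_const (K : ℝ)))
    (.of_forall fun z y _ ↦ (hf _).hasDerivAt.comp_add_const y _)).2
  have hlip := hK.dist_le_mul (y + √t * z) (x + √t * z)
  rw [dist_add_right, dist_eq_norm] at hlip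
  calc ‖deriv f (y + √t * z)‖
      ≤ ‖deriv f (x + √t * z)‖ + ‖deriv f (y + √t * z) - deriv f (x + √t * z)‖ :=
        norm_le_norm_add_norm_sub' _ _
    _ ≤ ‖deriv f (x + √t * z)‖ + K := by
        gcongr
        exact hlip.trans (mul_le_of_le_one_right K.2 (Metric.mem_ball.1 hy).le)

lemma differentiable_heatFlow (hf : Differentiable ℝ f) (hK : LipschitzWith K (deriv f)) (t : ℝ) :
    Differentiable ℝ (heatFlow f t) :=
  fun x ↦ (hasDerivAt_heatFlow hf hK t x).differentiableAt

lemma deriv_heatFlow (hf : Differentiable ℝ f) (hK : LipschitzWith K (deriv f)) (t : ℝ) :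
    deriv (heatFlow f t) = heatFlow (deriv f) t :=
  deriv_eq (hasDerivAt_heatFlow hf hK t)

lemma hasDerivAt_heatFlow_of_lipschitzWith (hg : LipschitzWith K g) (ht : 0 < t) (x : ℝ) :
    HasDerivAt (heatFlow g t) (heatGrad g t x) x := by
  have hst : √t ≠ 0 := (Real.sqrt_pos.2 ht).ne'
  have hshift : heatFlow g t = fun y ↦ ∫ z, g (x + √t * (z + (y - x) / √t)) ∂γ := by
    ext y
    unfold heatFlow
    congr with z
    field_simp
    ring_nf
  have hstein := hasDerivAt_integral_comp_add_stdGaussian (memLp_comp_affine_stdGaussian hg x √t)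
  have hinner : HasDerivAt (fun y ↦ (y - x) / √t) (1 / √t) x :=
    ((hasDerivAt_id x).sub_const x).div_const _
  rw [hshift]
  exact (hstein.comp_of_eq x hinner (by simp)).congr_deriv (mul_one_div _ _)

lemma abs_heatGrad_le (hg : LipschitzWith K g) (ht : 0 < t) (x : ℝ) : |heatGrad g t x| ≤ K := by
  rw [← (hasDerivAt_heatFlow_of_lipschitzWith hg ht x).deriv]
  exact norm_deriv_le_of_lipschitz (lipschitzWith_heatFlow hg t)

lemma lipschitzWith_heatGrad (hg : LipschitzWith K g) (t : ℝ) :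
    LipschitzWith (K / √t).toNNReal (heatGrad g t) := by
  refine .of_dist_le_mul fun x y ↦ ?_
  have hint (x : ℝ) : Integrable (fun z ↦ g (x + √t * z) * z) γ :=
    (memLp_comp_affine_stdGaussian hg x √t).integrable_mul
      (memLp_id_gaussianReal' 2 ENNReal.ofNat_ne_top)
  have hpoint (z : ℝ) : ‖g (x + √t * z) * z - g (y + √t * z) * z‖ ≤ K * dist x y * |z| := by
    rw [← sub_mul, norm_mul, Real.norm_eq_abs z]
    gcongr
    simpa [dist_eq_norm] using hg.dist_le_mul (x + √t * z) (y + √t * z)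
  have hnum : |∫ z, g (x + √t * z) * z ∂γ - ∫ z, g (y + √t * z) * z ∂γ| ≤ K * dist x y :=
    calc |∫ z, g (x + √t * z) * z ∂γ - ∫ z, g (y + √t * z) * z ∂γ|
        = ‖∫ z, (g (x + √t * z) * z - g (y + √t * z) * z) ∂γ‖ := by
          rw [integral_sub (hint x) (hint y), Real.norm_eq_abs]
      _ ≤ ∫ z, K * dist x y * |z| ∂γ :=
          norm_integral_le_of_norm_le
            (by simpa using (integrable_pow_stdGaussian 1).abs.const_mul (K * dist x y))
            (.of_forall hpoint)
      _ ≤ K * dist x y := by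
          rw [integral_const_mul]
          exact mul_le_of_le_one_right (by positivity) integral_abs_stdGaussian_le
  rw [Real.dist_eq, heatGrad, heatGrad, ← sub_div, abs_div, abs_of_nonneg (sqrt_nonneg t),
    Real.coe_toNNReal _ (by positivity), div_mul_eq_mul_div]
  gcongr

lemma abs_heatFlow_sub_le_of_lipschitzWith (hg : LipschitzWith K g) (t x : ℝ) :
    |heatFlow g t x - g x| ≤ K * √t := by
  refine (abs_integral_stdGaussian_sub_le (n := 1) (b := 0) (d := 0) (C := K * √t)
    ((memLp_comp_affine_stdGaussian hg x √t).integrable one_le_two) fun z ↦ ?_).trans ?_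
  · simpa [Real.dist_eq, abs_mul, mul_assoc, abs_of_nonneg (sqrt_nonneg t)]
      using hg.dist_le_mul (x + √t * z) x
  · simpa using mul_le_of_le_one_right (by positivity) integral_abs_stdGaussian_le

lemma abs_heatFlow_sub_le (hf : Differentiable ℝ f) (hK : LipschitzWith K (deriv f))
    (ht : 0 ≤ t) (x : ℝ) : |heatFlow f t x - f x| ≤ K / 2 * t := by
  refine (abs_integral_stdGaussian_sub_le (n := 2) (b := √t * deriv f x) (d := 0)
    (C := K / 2 * t) (integrable_comp_affine_stdGaussian hf hK x √t) fun z ↦ ?_).trans_eq ?_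
  · have := abs_sub_taylor_one_le (fun x ↦ (hf x).hasDerivAt) hK x (x + √t * z)
    rw [add_sub_cancel_left, mul_pow, sq_sqrt ht, ← sq_abs z,
      ← mul_assoc (K / 2 : ℝ)] at this
    convert this using 2
    ring
  · simp [integral_sq_stdGaussian]

lemma abs_heatFlow_sub_laplacian_le {f' f'' : ℝ → ℝ} (hint : Integrable (fun z ↦ f (x + √t * z)) γ)
    (hf : ∀ x, HasDerivAt f (f' x) x) (hf' : ∀ x, HasDerivAt f' (f'' x) x)
    (hK : LipschitzWith K f'') (ht : 0 ≤ t) :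
    |heatFlow f t x - f x - t / 2 * f'' x| ≤ K / 3 * (t * √t) := by
  rw [sub_sub]
  refine (abs_integral_stdGaussian_sub_le (n := 3) (b := √t * f' x) (d := t / 2 * f'' x)
    (C := K / 6 * (t * √t)) hint fun z ↦ ?_).trans ?_
  · have := abs_sub_taylor_two_le hf hf' hK x (√t * z)
    rw [mul_pow, sq_sqrt ht, abs_mul, mul_pow, abs_of_nonneg (sqrt_nonneg t), pow_succ √t 2,
      sq_sqrt ht, ← mul_assoc (K / 6 : ℝ)] at this
    convert this using 2
    ring
  · calc K / 6 * (t * √t) * ∫ z, |z| ^ 3 ∂γ ≤ K / 6 * (t * √t) * 2 := by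
          gcongr
          exact integral_abs_pow_three_stdGaussian_le
      _ = K / 3 * (t * √t) := by ring

lemma map_mul_stdGaussian (ht : 0 ≤ t) :
    (γ).map (fun z ↦ √t * z) = gaussianReal 0 t.toNNReal := by
  rw [gaussianReal_map_const_mul, mul_zero, mul_one]
  congr
  simp [sq_sqrt ht, ht]

lemma heatFlow_eq_integral_gaussianReal (hf : Measurable f) (ht : 0 ≤ t) (x : ℝ) :
    heatFlow f t x = ∫ w, f (x + w) ∂gaussianReal 0 t.toNNReal := by
  rw [← map_mul_stdGaussian ht, integral_map (by fun_prop)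
    (Measurable.aestronglyMeasurable (by fun_prop))]
  rfl

lemma heatFlow_add (hf : Differentiable ℝ f) (hK : LipschitzWith K (deriv f)) {s : ℝ}
    (ht : 0 ≤ t) (hs : 0 ≤ s) (x : ℝ) :
    heatFlow f (t + s) x = heatFlow (heatFlow f t) s x := by
  have hfc := hf.continuous
  have hfm := hfc.measurable
  have hconv : gaussianReal 0 (t + s).toNNReal =
      gaussianReal 0 s.toNNReal ∗ gaussianReal 0 t.toNNReal := by
    rw [gaussianReal_conv_gaussianReal, add_zero, add_comm t, Real.toNNReal_add hs ht]
  have hint : Integrable (fun w ↦ f (x + w)) (gaussianReal 0 (t + s).toNNReal) := by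
    rw [← map_mul_stdGaussian (by positivity), integrable_map_measure (by fun_prop) (by fun_prop)]
    exact integrable_comp_affine_stdGaussian hf hK x √(t + s)
  have hmeas : Measurable (heatFlow f t) :=
    (measurable_heatFlow hfm).comp (measurable_const.prodMk measurable_id)
  rw [heatFlow_eq_integral_gaussianReal hfm (by positivity), hconv,
    integral_conv (hconv ▸ hint), heatFlow_eq_integral_gaussianReal hmeas hs]
  simp_rw [heatFlow_eq_integral_gaussianReal hfm ht, add_assoc]

lemma abs_heatFlow_add_sub_le (hf : Differentiable ℝ f) (hK : LipschitzWith K (deriv f)) {s : ℝ}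
    (ht : 0 ≤ t) (hs : 0 ≤ s) (x : ℝ) :
    |heatFlow f (t + s) x - heatFlow f t x| ≤ K / 2 * s := by
  rw [heatFlow_add hf hK ht hs]
  exact abs_heatFlow_sub_le (differentiable_heatFlow hf hK t)
    (deriv_heatFlow hf hK t ▸ lipschitzWith_heatFlow hK t) hs x

lemma abs_heatFlow_add_sub_laplacian_le (hf : Differentiable ℝ f) (hK : LipschitzWith K (deriv f))
    {s : ℝ} (ht : 0 < t) (hs : 0 ≤ s) (x : ℝ) :
    |heatFlow f (t + s) x - heatFlow f t x - s / 2 * heatGrad (deriv f) t x|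
      ≤ K / √t / 3 * (s * √s) := by
  rw [heatFlow_add hf hK ht.le hs]
  have := abs_heatFlow_sub_laplacian_le (x := x) (t := s)
    (integrable_comp_affine_stdGaussian (differentiable_heatFlow hf hK t)
      (deriv_heatFlow hf hK t ▸ lipschitzWith_heatFlow hK t) x √s)
    (hasDerivAt_heatFlow hf hK t) (hasDerivAt_heatFlow_of_lipschitzWith hK ht)
    (lipschitzWith_heatGrad hK t) hs
  rwa [Real.coe_toNNReal _ (by positivity)] at this

end Smoothing

/-! ### The Lindeberg argument along a path -/

lemma div_sqrt_le_three_mul_sqrt_add_sub {t a : ℝ} (ht : 0 < t) (ha : 0 ≤ a) (hat : a ≤ t) :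
    a / √t ≤ 3 * (√(t + a) - √t) := by
  have hpos : 0 < √t := sqrt_pos.2 ht
  have hmono : √t ≤ √(t + a) := sqrt_le_sqrt (by linarith)
  have hdouble : √(t + a) ≤ 2 * √t := sqrt_le_iff.2 ⟨by positivity, by
    rw [mul_pow, sq_sqrt ht.le]
    linarith⟩
  rw [div_le_iff₀ hpos]
  nlinarith [sq_sqrt ht.le, sq_sqrt (add_nonneg ht.le ha)]

section Path

open Finset

variable {f : ℝ → ℝ} {K : ℝ≥0} {M t : ℝ}

-- Raising the second-order coefficient by `K * M / √t` absorbs the third-order error in `y`, at the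
-- price of the multiple of `a / √t` that the last term dominates.
lemma heatFlow_step_le (hf : Differentiable ℝ f) (hK : LipschitzWith K (deriv f)) {q a y : ℝ}
    (hM : 0 < M) (ht : M ^ 2 ≤ t) (ha : 0 ≤ a) (haq : a ≤ q) (haM : a ≤ M ^ 2) (hy : |y| ≤ M)
    (x : ℝ) :
    heatFlow f t (x + y) - heatFlow f (t + a) x ≤
      y * heatFlow (deriv f) t x + (y ^ 2 - q) * ((heatGrad (deriv f) t x + K * M / √t) / 2) +
        K * (q - a) + 3 * K * M * (√(t + a) - √t) := by
  have ht₀ : 0 < t := (by positivity : 0 < M ^ 2).trans_le ht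
  have hMt : M ≤ √t := le_sqrt_of_sq_le ht
  have hspace := (abs_le.1 (abs_sub_taylor_two_le (hasDerivAt_heatFlow hf hK t)
    (hasDerivAt_heatFlow_of_lipschitzWith hK ht₀) (lipschitzWith_heatGrad hK t) x y)).2
  rw [Real.coe_toNNReal _ (by positivity)] at hspace
  have htime := (abs_le.1 (abs_heatFlow_add_sub_laplacian_le hf hK ht₀ ha x)).1
  have hy₃ : K / √t / 6 * |y| ^ 3 ≤ K * M / √t * y ^ 2 / 6 :=
    calc K / √t / 6 * |y| ^ 3 = K / √t / 6 * (y ^ 2 * |y|) := by rw [← sq_abs]; ring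
      _ ≤ K / √t / 6 * (y ^ 2 * M) := by gcongr
      _ = K * M / √t * y ^ 2 / 6 := by ring
  have ha₃ : K / √t / 3 * (a * √a) ≤ K * M / √t * a / 3 :=
    calc K / √t / 3 * (a * √a) ≤ K / √t / 3 * (a * M) := by
          gcongr
          exact sqrt_le_iff.2 ⟨hM.le, haM⟩
      _ = K * M / √t * a / 3 := by ring
  have hgrad : (q - a) * heatGrad (deriv f) t x ≤ (q - a) * K :=
    mul_le_mul_of_nonneg_left (le_of_abs_le (abs_heatGrad_le hK ht₀ x)) (sub_nonneg.2 haq)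
  have hratio : K * M / √t * (q - a) ≤ K * (q - a) := by
    refine mul_le_mul_of_nonneg_right ?_ (sub_nonneg.2 haq)
    exact div_le_of_le_mul₀ (sqrt_nonneg t) K.2 (by gcongr)
  have htele : K * M / √t * a ≤ 3 * K * M * (√(t + a) - √t) :=
    calc K * M / √t * a = K * M * (a / √t) := by ring
      _ ≤ K * M * (3 * (√(t + a) - √t)) := by
          gcongr
          exact div_sqrt_le_three_mul_sqrt_add_sub ht₀ ha (haM.trans ht)
      _ = 3 * K * M * (√(t + a) - √t) := by ring
  have hcoeff : 0 ≤ K * M / √t := by positivity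
  nlinarith [mul_nonneg hcoeff (sq_nonneg y), mul_nonneg hcoeff ha]

variable (f K M) (v : ℝ) (y q : ℕ → ℝ)

/-- The smoothing time before step `k`: the part of the total variance `v` not yet spent by the
conditional variances `q`, cut off at `0` and shifted by `M ^ 2` to keep the heat flow regular. -/
def smoothingTime (k : ℕ) : ℝ := M ^ 2 + max (v - ∑ j ∈ range k, q j) 0

/-- The coefficient of the increment `y k` in step `k` of the Lindeberg expansion. -/
def incrementCoeff (k : ℕ) : ℝ :=
  heatFlow (deriv f) (smoothingTime M v q (k + 1)) (∑ j ∈ range k, y j)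

/-- The coefficient of `y k ^ 2 - q k` in step `k` of the Lindeberg expansion: half of the second
space derivative of the smoothed test function, raised to absorb the third-order error. -/
def varianceCoeff (k : ℕ) : ℝ :=
  (heatGrad (deriv f) (smoothingTime M v q (k + 1)) (∑ j ∈ range k, y j) +
    K * M / √(smoothingTime M v q (k + 1))) / 2

/-- The martingale part of step `k` of the Lindeberg expansion. -/
def lindebergTerm (k : ℕ) : ℝ :=
  y k * incrementCoeff f M v y q k + (y k ^ 2 - q k) * varianceCoeff f K M v y q k

variable {f K M v y q}

lemma sq_le_smoothingTime (M v : ℝ) (q : ℕ → ℝ) (k : ℕ) : M ^ 2 ≤ smoothingTime M v q k :=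
  le_add_of_nonneg_right (le_max_right _ _)

lemma smoothingTime_zero (hv : 0 ≤ v) : smoothingTime M v q 0 = v + M ^ 2 := by
  simp [smoothingTime, hv, add_comm]

lemma smoothingTime_succ_le (M v : ℝ) {k : ℕ} (hq : 0 ≤ q k) :
    smoothingTime M v q (k + 1) ≤ smoothingTime M v q k := by
  simp only [smoothingTime, sum_range_succ]
  gcongr
  linarith

lemma smoothingTime_sub_succ_le (M v : ℝ) {k : ℕ} (hq : 0 ≤ q k) :
    smoothingTime M v q k - smoothingTime M v q (k + 1) ≤ q k := by
  simp only [smoothingTime, sum_range_succ]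
  rw [add_sub_add_left_eq_sub, sub_le_iff_le_add]
  exact max_le (by linarith [le_max_left (v - (∑ j ∈ range k, q j + q k)) 0]) (by positivity)

lemma smoothingTime_le (M : ℝ) {k : ℕ} (hv : 0 ≤ v) (hq : ∀ j < k, 0 ≤ q j) :
    smoothingTime M v q k ≤ v + M ^ 2 := by
  have := sum_nonneg fun j hj ↦ hq j (mem_range.1 hj)
  rw [smoothingTime, add_comm v]
  gcongr
  exact max_le (by linarith) hv

lemma abs_incrementCoeff_le (hK : LipschitzWith K (deriv f)) {k : ℕ} (hv : 0 ≤ v)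
    (hq : ∀ j ≤ k, 0 ≤ q j) :
    |incrementCoeff f M v y q k| ≤ |deriv f (∑ j ∈ range k, y j)| + K * √(v + M ^ 2) := by
  have hτ := smoothingTime_le M hv fun j hj ↦ hq j (Nat.lt_succ_iff.1 hj)
  calc |incrementCoeff f M v y q k|
      ≤ |deriv f (∑ j ∈ range k, y j)| +
          |incrementCoeff f M v y q k - deriv f (∑ j ∈ range k, y j)| :=
        sub_le_iff_le_add'.1 (abs_sub_abs_le_abs_sub _ _)
    _ ≤ |deriv f (∑ j ∈ range k, y j)| + K * √(smoothingTime M v q (k + 1)) := by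
        gcongr
        exact abs_heatFlow_sub_le_of_lipschitzWith hK _ _
    _ ≤ |deriv f (∑ j ∈ range k, y j)| + K * √(v + M ^ 2) := by gcongr

lemma abs_varianceCoeff_le (hK : LipschitzWith K (deriv f)) (hM : 0 < M) (k : ℕ) :
    |varianceCoeff f K M v y q k| ≤ K := by
  have hle := sq_le_smoothingTime M v q (k + 1)
  have hratio : K * M / √(smoothingTime M v q (k + 1)) ≤ K :=
    div_le_of_le_mul₀ (sqrt_nonneg _) K.2 (by gcongr; exact le_sqrt_of_sq_le hle)
  have hgrad := abs_heatGrad_le hK ((by positivity : 0 < M ^ 2).trans_le hle)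
    (∑ j ∈ range k, y j)
  rw [varianceCoeff, abs_div, abs_two, div_le_iff₀ two_pos]
  calc |heatGrad (deriv f) (smoothingTime M v q (k + 1)) (∑ j ∈ range k, y j) +
        K * M / √(smoothingTime M v q (k + 1))|
      ≤ K + |K * M / √(smoothingTime M v q (k + 1))| := (abs_add_le _ _).trans (by gcongr)
    _ ≤ K * 2 := by
        rw [abs_of_nonneg (by positivity)]
        linarith

lemma sum_step_errors_le {n : ℕ} (hM : 0 ≤ M) (hv : 0 ≤ v) :
    ∑ k ∈ range n, (K * (q k - (smoothingTime M v q k - smoothingTime M v q (k + 1))) +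
        3 * K * M * (√(smoothingTime M v q k) - √(smoothingTime M v q (k + 1)))) +
      K / 2 * smoothingTime M v q n + K / 2 * M ^ 2 ≤
      K * (4 * M * √(v + M ^ 2) + |∑ k ∈ range n, q k - v|) := by
  have hMv : M ^ 2 ≤ M * √(v + M ^ 2) := by
    rw [pow_two]
    gcongr
    exact le_sqrt_of_sq_le (by linarith)
  have hexcess : ∑ k ∈ range n, q k - v + 3 / 2 * max (v - ∑ k ∈ range n, q k) 0 ≤
      |∑ k ∈ range n, q k - v| := by
    rcases max_cases (v - ∑ k ∈ range n, q k) 0 with ⟨h, -⟩ | ⟨h, -⟩ <;> rw [h] <;>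
      cases abs_cases (∑ k ∈ range n, q k - v) <;> linarith
  rw [sum_add_distrib, ← mul_sum, ← mul_sum, sum_sub_distrib, sum_range_sub',
    sum_range_sub' (fun k ↦ √(smoothingTime M v q k)), smoothingTime_zero hv]
  have hdrop : M * (√(v + M ^ 2) - √(smoothingTime M v q n)) ≤ M * √(v + M ^ 2) := by
    gcongr
    exact sub_le_self _ (sqrt_nonneg _)
  calc K * (∑ k ∈ range n, q k - (v + M ^ 2 - smoothingTime M v q n)) +
        3 * K * M * (√(v + M ^ 2) - √(smoothingTime M v q n)) +
        K / 2 * smoothingTime M v q n + K / 2 * M ^ 2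
      = K * (∑ k ∈ range n, q k - v + 3 / 2 * max (v - ∑ k ∈ range n, q k) 0 +
          3 * (M * (√(v + M ^ 2) - √(smoothingTime M v q n))) + M ^ 2) := by
        rw [smoothingTime]
        ring
    _ ≤ K * (4 * M * √(v + M ^ 2) + |∑ k ∈ range n, q k - v|) := by
        refine mul_le_mul_of_nonneg_left ?_ K.2
        linarith

lemma comp_sum_sub_heatFlow_le {n : ℕ} (hf : Differentiable ℝ f) (hK : LipschitzWith K (deriv f))
    (hM : 0 < M) (hv : 0 ≤ v) (hy : ∀ k < n, |y k| ≤ M) (hq : ∀ k < n, 0 ≤ q k ∧ q k ≤ M ^ 2) :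
    f (∑ k ∈ range n, y k) - heatFlow f v 0 ≤
      ∑ k ∈ range n, lindebergTerm f K M v y q k +
      K * (4 * M * √(v + M ^ 2) + |∑ k ∈ range n, q k - v|) := by
  set τ := smoothingTime M v q with hτ
  have hstep (k) (hk : k ∈ range n) :
      heatFlow f (τ (k + 1)) (∑ j ∈ range (k + 1), y j) - heatFlow f (τ k) (∑ j ∈ range k, y j) ≤
        lindebergTerm f K M v y q k +
        (K * (q k - (τ k - τ (k + 1))) + 3 * K * M * (√(τ k) - √(τ (k + 1)))) := by
    obtain ⟨hq₀, hqM⟩ := hq k (mem_range.1 hk)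
    have ha := smoothingTime_sub_succ_le M v hq₀
    have := heatFlow_step_le hf hK hM (sq_le_smoothingTime M v q (k + 1))
      (sub_nonneg.2 (smoothingTime_succ_le M v hq₀)) ha (ha.trans hqM)
      (hy k (mem_range.1 hk)) (∑ j ∈ range k, y j)
    rw [add_sub_cancel, ← sum_range_succ, add_assoc] at this
    exact this
  have hsum := sum_le_sum hstep
  rw [sum_range_sub (fun k ↦ heatFlow f (τ k) (∑ j ∈ range k, y j)), sum_add_distrib] at hsum
  have hend := (abs_le.1 (abs_heatFlow_sub_le hf hK
    ((sq_nonneg M).trans (sq_le_smoothingTime M v q n)) (∑ k ∈ range n, y k))).1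
  have hstart := (abs_le.1 (abs_heatFlow_add_sub_le hf hK hv (sq_nonneg M) 0)).2
  have herr := sum_step_errors_le (K := K) (q := q) (n := n) hM.le hv
  simp only [hτ, smoothingTime_zero hv, range_zero, sum_empty] at *
  linarith

end Path

/-! ### Martingale differences -/

lemma integral_mul_eq_zero_of_condExp_eq_zero {Ω : Type*} {m m0 : MeasurableSpace Ω}
    {μ : Measure Ω} (hm : m ≤ m0) [SigmaFinite (μ.trim hm)] {f g : Ω → ℝ} (hf : Integrable f μ)
    (hf₀ : μ[f | m] =ᵐ[μ] 0) (hg : StronglyMeasurable[m] g)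
    (hfg : Integrable (fun ω ↦ f ω * g ω) μ) : ∫ ω, f ω * g ω ∂μ = 0 := by
  have hpull : μ[fun ω ↦ f ω * g ω | m] =ᵐ[μ] 0 := by
    filter_upwards [condExp_mul_of_stronglyMeasurable_right hg hfg hf, hf₀] with ω hω hω₀
    exact hω.trans (by simp [hω₀])
  rw [← integral_condExp hm, integral_congr_ae hpull]
  simp

/-- The conditional variance `E[Y_{k+1}² | F_k]` at `ω`. The increments `Y_1, …, Y_n` are indexed
from `0` as `Y (k + 1)` with `k < n`. -/
def stepVariance {Ω : Type*} [MeasurableSpace Ω] (μ : Measure Ω) (F : ℕ → MeasurableSpace Ω)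
    (Y : ℕ → Ω → ℝ) (ω : Ω) (k : ℕ) : ℝ := (μ[fun ω' ↦ Y (k + 1) ω' ^ 2 | F k]) ω

lemma ae_stepVariance_nonneg {Ω : Type*} [MeasurableSpace Ω] (μ : Measure Ω)
    (F : ℕ → MeasurableSpace Ω) (Y : ℕ → Ω → ℝ) : ∀ᵐ ω ∂μ, ∀ k, 0 ≤ stepVariance μ F Y ω k :=
  ae_all_iff.2 fun _ ↦ condExp_nonneg (.of_forall fun _ ↦ sq_nonneg _)

namespace IsMDS

open Finset

variable {Ω : Type*} [m0 : MeasurableSpace Ω] {μ : Measure Ω}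
  {F : ℕ → MeasurableSpace Ω} {n k : ℕ} {Y : ℕ → Ω → ℝ} {f : ℝ → ℝ} {K : ℝ≥0} {M v : ℝ}

lemma measurable_sum (h : IsMDS μ F n Y) (hk : k ≤ n) :
    Measurable[F k] fun ω ↦ ∑ j ∈ range k, Y (j + 1) ω :=
  Finset.measurable_fun_sum _ fun j hj ↦
    (h.adapted (j + 1) (Nat.le_add_left 1 j) (by grind)).mono (h.mono (by grind)) le_rfl

lemma memLp_sum (h : IsMDS μ F n Y) (hk : k ≤ n) :
    MemLp (fun ω ↦ ∑ j ∈ range k, Y (j + 1) ω) 2 μ :=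
  memLp_finsetSum _ fun j hj ↦ h.memL2 (j + 1) (Nat.le_add_left 1 j) (by grind)

lemma measurable_smoothingTime (h : IsMDS μ F n Y) :
    Measurable[F k] fun ω ↦ smoothingTime M v (stepVariance μ F Y ω) (k + 1) := by
  have hsum : Measurable[F k] fun ω ↦ ∑ j ∈ range (k + 1), stepVariance μ F Y ω j :=
    Finset.measurable_fun_sum _ fun j hj ↦
      stronglyMeasurable_condExp.measurable.mono (h.mono (by grind)) le_rfl
  exact ((hsum.const_sub v).max measurable_const).const_add _

lemma stronglyMeasurable_incrementCoeff (h : IsMDS μ F n Y) (hk : k ≤ n) :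
    StronglyMeasurable[F k] fun ω ↦
      incrementCoeff f M v (fun j ↦ Y (j + 1) ω) (stepVariance μ F Y ω) k :=
  ((measurable_heatFlow (measurable_deriv f)).comp
    (h.measurable_smoothingTime.prodMk (h.measurable_sum hk))).stronglyMeasurable

lemma stronglyMeasurable_varianceCoeff (h : IsMDS μ F n Y) (hk : k ≤ n) :
    StronglyMeasurable[F k] fun ω ↦
      varianceCoeff f K M v (fun j ↦ Y (j + 1) ω) (stepVariance μ F Y ω) k :=
  (((measurable_heatGrad (measurable_deriv f)).comp
    (h.measurable_smoothingTime.prodMk (h.measurable_sum hk))).add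
      (h.measurable_smoothingTime.sqrt.const_div _)).div_const 2 |>.stronglyMeasurable

lemma integrable_sq_sub_stepVariance (h : IsMDS μ F n Y) (hk : k < n) :
    Integrable (fun ω ↦ Y (k + 1) ω ^ 2 - stepVariance μ F Y ω k) μ :=
  (h.memL2 (k + 1) (by lia) hk).integrable_sq.sub integrable_condExp

lemma integrable_mul_varianceCoeff (h : IsMDS μ F n Y) (hk : k < n)
    (hK : LipschitzWith K (deriv f)) (hM : 0 < M) :
    Integrable (fun ω ↦ (Y (k + 1) ω ^ 2 - stepVariance μ F Y ω k) *
      varianceCoeff f K M v (fun j ↦ Y (j + 1) ω) (stepVariance μ F Y ω) k) μ :=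
  (h.integrable_sq_sub_stepVariance hk).mul_bdd (c := K)
    ((h.stronglyMeasurable_varianceCoeff hk.le).mono (h.le k)).aestronglyMeasurable
    (.of_forall fun _ ↦ abs_varianceCoeff_le hK hM k)

section IsFiniteMeasure

variable [IsFiniteMeasure μ]

lemma ae_stepVariance_le (h : IsMDS μ F n Y) (hk : k < n)
    (hY : ∀ᵐ ω ∂μ, |Y (k + 1) ω| ≤ M) : ∀ᵐ ω ∂μ, stepVariance μ F Y ω k ≤ M ^ 2 := by
  have hsq : (fun ω ↦ Y (k + 1) ω ^ 2) ≤ᵐ[μ] fun _ ↦ M ^ 2 :=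
    hY.mono fun ω hω ↦ sq_le_sq.2 (hω.trans (le_abs_self M))
  have := condExp_mono (m := F k) (h.memL2 (k + 1) (by lia) hk).integrable_sq
    (integrable_const _) hsq
  rwa [condExp_const (h.le k)] at this

lemma memLp_incrementCoeff (h : IsMDS μ F n Y) (hk : k ≤ n) (hK : LipschitzWith K (deriv f))
    (hv : 0 ≤ v) :
    MemLp (fun ω ↦ incrementCoeff f M v (fun j ↦ Y (j + 1) ω) (stepVariance μ F Y ω) k) 2 μ := by
  refine ((memLp_comp_of_lipschitzWith hK (h.memLp_sum hk)).norm.add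
    (memLp_const (K * √(v + M ^ 2)))).mono'
    ((h.stronglyMeasurable_incrementCoeff hk).mono (h.le k)).aestronglyMeasurable ?_
  filter_upwards [ae_stepVariance_nonneg μ F Y] with ω hω
  exact abs_incrementCoeff_le hK hv fun j _ ↦ hω j

lemma integrable_mul_incrementCoeff (h : IsMDS μ F n Y) (hk : k < n)
    (hK : LipschitzWith K (deriv f)) (hv : 0 ≤ v) :
    Integrable (fun ω ↦ Y (k + 1) ω *
      incrementCoeff f M v (fun j ↦ Y (j + 1) ω) (stepVariance μ F Y ω) k) μ :=
  (h.memL2 (k + 1) (by lia) hk).integrable_mul (h.memLp_incrementCoeff hk.le hK hv)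

lemma integral_mul_incrementCoeff (h : IsMDS μ F n Y) (hk : k < n)
    (hK : LipschitzWith K (deriv f)) (hv : 0 ≤ v) :
    ∫ ω, Y (k + 1) ω *
      incrementCoeff f M v (fun j ↦ Y (j + 1) ω) (stepVariance μ F Y ω) k ∂μ = 0 :=
  integral_mul_eq_zero_of_condExp_eq_zero (h.le k)
    ((h.memL2 (k + 1) (by lia) hk).integrable one_le_two) (h.mdiff (k + 1) (by lia) hk)
    (h.stronglyMeasurable_incrementCoeff hk.le) (h.integrable_mul_incrementCoeff hk hK hv)

lemma integral_mul_varianceCoeff (h : IsMDS μ F n Y) (hk : k < n)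
    (hK : LipschitzWith K (deriv f)) (hM : 0 < M) :
    ∫ ω, (Y (k + 1) ω ^ 2 - stepVariance μ F Y ω k) *
      varianceCoeff f K M v (fun j ↦ Y (j + 1) ω) (stepVariance μ F Y ω) k ∂μ = 0 := by
  have hsq := (h.memL2 (k + 1) (by lia) hk).integrable_sq
  have hcentred : μ[fun ω ↦ Y (k + 1) ω ^ 2 - stepVariance μ F Y ω k | F k] =ᵐ[μ] 0 := by
    filter_upwards [condExp_sub hsq (integrable_condExp (m := F k)) (F k)] with ω hω
    refine hω.trans ?_
    rw [condExp_of_stronglyMeasurable (h.le k) stronglyMeasurable_condExp integrable_condExp]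
    simp
  exact integral_mul_eq_zero_of_condExp_eq_zero (h.le k)
    (h.integrable_sq_sub_stepVariance hk) hcentred
    (h.stronglyMeasurable_varianceCoeff hk.le) (h.integrable_mul_varianceCoeff hk hK hM)

lemma integrable_lindebergTerm (h : IsMDS μ F n Y) (hk : k < n) (hK : LipschitzWith K (deriv f))
    (hM : 0 < M) (hv : 0 ≤ v) :
    Integrable (fun ω ↦
      lindebergTerm f K M v (fun j ↦ Y (j + 1) ω) (stepVariance μ F Y ω) k) μ :=
  (h.integrable_mul_incrementCoeff hk hK hv).add (h.integrable_mul_varianceCoeff hk hK hM)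

lemma integral_lindebergTerm (h : IsMDS μ F n Y) (hk : k < n) (hK : LipschitzWith K (deriv f))
    (hM : 0 < M) (hv : 0 ≤ v) :
    ∫ ω, lindebergTerm f K M v (fun j ↦ Y (j + 1) ω) (stepVariance μ F Y ω) k ∂μ = 0 := by
  simp only [lindebergTerm]
  rw [integral_add (h.integrable_mul_incrementCoeff hk hK hv)
    (h.integrable_mul_varianceCoeff hk hK hM), h.integral_mul_incrementCoeff hk hK hv,
    h.integral_mul_varianceCoeff hk hK hM, add_zero]

lemma ae_comp_sum_sub_heatFlow_le (h : IsMDS μ F n Y) (hf : Differentiable ℝ f)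
    (hK : LipschitzWith K (deriv f)) (hM : 0 < M) (hv : 0 ≤ v)
    (hY : ∀ k < n, ∀ᵐ ω ∂μ, |Y (k + 1) ω| ≤ M) :
    ∀ᵐ ω ∂μ, f (∑ k ∈ range n, Y (k + 1) ω) - heatFlow f v 0 ≤
      ∑ k ∈ range n, lindebergTerm f K M v (fun j ↦ Y (j + 1) ω) (stepVariance μ F Y ω) k +
      K * (4 * M * √(v + M ^ 2) + |∑ k ∈ range n, stepVariance μ F Y ω k - v|) := by
  have hq : ∀ k < n, ∀ᵐ ω ∂μ, stepVariance μ F Y ω k ≤ M ^ 2 :=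
    fun k hk ↦ h.ae_stepVariance_le hk (hY k hk)
  have hcount := Set.to_countable (Set.Iio n)
  filter_upwards [(ae_ball_iff hcount).2 hY, (ae_ball_iff hcount).2 hq,
    ae_stepVariance_nonneg μ F Y] with ω hyω hqω hq₀
  exact comp_sum_sub_heatFlow_le hf hK hM hv hyω fun k hk ↦ ⟨hq₀ k, hqω k hk⟩

end IsFiniteMeasure

theorem integral_comp_sum_sub_heatFlow_le [IsProbabilityMeasure μ] (h : IsMDS μ F n Y)
    (hf : Differentiable ℝ f) (hK : LipschitzWith K (deriv f)) (hM : 0 < M) (hv : 0 ≤ v)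
    (hY : ∀ k < n, ∀ᵐ ω ∂μ, |Y (k + 1) ω| ≤ M) :
    ∫ ω, f (∑ k ∈ range n, Y (k + 1) ω) ∂μ - heatFlow f v 0 ≤
      K * (4 * M * √(v + M ^ 2) + ∫ ω, |∑ k ∈ range n, stepVariance μ F Y ω k - v| ∂μ) := by
  have hfS := integrable_comp_of_lipschitzWith_deriv hf hK (h.memLp_sum le_rfl)
  have hterm (k) (hk : k ∈ range n) :=
    h.integrable_lindebergTerm (mem_range.1 hk) hK hM hv
  have herr : Integrable (fun ω ↦ |∑ k ∈ range n, stepVariance μ F Y ω k - v|) μ :=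
    ((integrable_finsetSum _ fun k _ ↦ integrable_condExp).sub (integrable_const v)).abs
  have herr' := ((integrable_const (4 * M * √(v + M ^ 2))).add herr).const_mul (K : ℝ)
  have hmean := integral_mono_ae (hfS.sub (integrable_const (heatFlow f v 0)))
    ((integrable_finsetSum _ hterm).add herr') (h.ae_comp_sum_sub_heatFlow_le hf hK hM hv hY)
  simp only [Pi.sub_apply, Pi.add_apply] at hmean herr'
  rw [integral_sub hfS (integrable_const _), integral_add (integrable_finsetSum _ hterm) herr',
    integral_finsetSum _ hterm,
    sum_eq_zero fun k hk ↦ h.integral_lindebergTerm (mem_range.1 hk) hK hM hv,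
    integral_const_mul, integral_add (integrable_const _) herr] at hmean
  simpa using hmean

end IsMDS

/-! ### The bound in `W₂` -/

lemma heatFlow_comp_div_sq (f : ℝ → ℝ) {s : ℝ} (hs : 0 < s) :
    heatFlow (fun x ↦ f (x / s)) (s ^ 2) 0 = ∫ z, f z ∂γ := by
  simp [heatFlow, sqrt_sq hs.le, hs.ne']

lemma lipschitzWith_deriv_comp_mul_left {f : ℝ → ℝ} {K : ℝ≥0} (hK : LipschitzWith K (deriv f))
    (c : ℝ) : LipschitzWith (‖c‖₊ ^ 2 * K) (deriv fun x ↦ f (c * x)) := by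
  refine .of_dist_le_mul fun x y ↦ ?_
  simp only [deriv_comp_mul_left, dist_smul₀]
  calc ‖c‖ * dist (deriv f (c * x)) (deriv f (c * y)) ≤ ‖c‖ * (K * dist (c * x) (c * y)) := by
        gcongr
        exact hK.dist_le_mul _ _
    _ = ↑(‖c‖₊ ^ 2 * K) * dist x y := by
        rw [Real.dist_eq, ← mul_sub, abs_mul, Real.dist_eq]
        push_cast
        rw [Real.norm_eq_abs]
        ring

lemma ae_abs_le_sup_eLpNorm_top {Ω : Type*} [MeasurableSpace Ω] {μ : Measure Ω} {ι : Type*}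
    {s : Finset ι} {Y : ι → Ω → ℝ} (hY : ∀ i ∈ s, eLpNorm (Y i) ⊤ μ < ⊤) {i : ι} (hi : i ∈ s) :
    ∀ᵐ ω ∂μ, |Y i ω| ≤ (s.sup fun j ↦ eLpNorm (Y j) ⊤ μ).toReal := by
  have hfin : s.sup (fun j ↦ eLpNorm (Y j) ⊤ μ) ≠ ⊤ := ((Finset.sup_lt_iff (by simp)).2 hY).ne
  filter_upwards [ae_le_eLpNormEssSup (f := Y i) (μ := μ)] with ω hω
  rw [← eLpNorm_exponent_top] at hω
  rw [← Real.norm_eq_abs, ← toReal_enorm]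
  exact ENNReal.toReal_mono hfin (hω.trans (Finset.le_sup (f := fun j ↦ eLpNorm (Y j) ⊤ μ) hi))

lemma integral_sq_le_sq_of_ae_abs_le {Ω : Type*} [MeasurableSpace Ω] {μ : Measure Ω}
    [IsProbabilityMeasure μ] {Y : Ω → ℝ} {M : ℝ} (hY : ∀ᵐ ω ∂μ, |Y ω| ≤ M) :
    ∫ ω, Y ω ^ 2 ∂μ ≤ M ^ 2 := by
  simpa using integral_mono_of_nonneg (.of_forall fun ω ↦ sq_nonneg (Y ω))
    (integrable_const (M ^ 2)) (hY.mono fun ω hω ↦ sq_le_sq.2 (hω.trans (le_abs_self M)))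

lemma sqrt_lindeberg_bound_le {M s D n : ℝ} (hM : 0 < M) (hs : 0 < s) (hD : 0 ≤ D)
    (hn : 1 ≤ n) (hsM : s ^ 2 ≤ n * M ^ 2) :
    √(4 * (4 * M * √(s ^ 2 + M ^ 2) / s ^ 2 + D)) ≤
      5 * (n ^ ((1 : ℝ) / 4) / s * M + D ^ ((1 : ℝ) / 2)) := by
  have hroot : √(s ^ 2 + M ^ 2) ≤ 3 / 2 * (√n * M) := sqrt_le_iff.2 ⟨by positivity, by
    rw [mul_pow, mul_pow, sq_sqrt (by positivity)]
    nlinarith [mul_le_mul_of_nonneg_right hn (sq_nonneg M)]⟩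
  have hquarter : (n ^ ((1 : ℝ) / 4)) ^ 2 = √n := by
    rw [sqrt_eq_rpow, ← rpow_natCast, ← rpow_mul (by positivity)]
    norm_num
  rw [← sqrt_eq_rpow D]
  refine sqrt_le_iff.2 ⟨by positivity, ?_⟩
  calc 4 * (4 * M * √(s ^ 2 + M ^ 2) / s ^ 2 + D)
      ≤ 4 * (4 * M * (3 / 2 * (√n * M)) / s ^ 2 + D) := by gcongr
    _ = 24 * (n ^ ((1 : ℝ) / 4) / s * M) ^ 2 + 4 * √D ^ 2 := by
        rw [mul_pow, div_pow, hquarter, sq_sqrt hD]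
        ring
    _ ≤ (5 * (n ^ ((1 : ℝ) / 4) / s * M + √D)) ^ 2 := by
        have : 0 ≤ n ^ ((1 : ℝ) / 4) / s * M * √D := by positivity
        nlinarith [sq_nonneg (n ^ ((1 : ℝ) / 4) / s * M), sq_nonneg √D]

namespace IsMDS

open Finset

variable {Ω : Type*} [MeasurableSpace Ω] {μ : Measure Ω} [IsProbabilityMeasure μ]
  {F : ℕ → MeasurableSpace Ω} {n : ℕ} {Y : ℕ → Ω → ℝ} {M s : ℝ}

lemma integral_comp_sum_div_sub_le (h : IsMDS μ F n Y) {f : ℝ → ℝ} {K : ℝ≥0}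
    (hf : Differentiable ℝ f) (hK : LipschitzWith K (deriv f)) (hM : 0 < M) (hs : 0 < s)
    (hY : ∀ k < n, ∀ᵐ ω ∂μ, |Y (k + 1) ω| ≤ M) :
    ∫ ω, f ((∑ k ∈ range n, Y (k + 1) ω) / s) ∂μ - ∫ z, f z ∂γ ≤
      K * (4 * M * √(s ^ 2 + M ^ 2) / s ^ 2 +
        ∫ ω, |(∑ k ∈ range n, stepVariance μ F Y ω k) / s ^ 2 - 1| ∂μ) := by
  have hbound := h.integral_comp_sum_sub_heatFlow_le (hf.comp (differentiable_id.const_mul s⁻¹))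
    (lipschitzWith_deriv_comp_mul_left hK s⁻¹) hM (sq_nonneg s) hY
  have hscale : ∫ ω, |∑ k ∈ range n, stepVariance μ F Y ω k - s ^ 2| ∂μ =
      s ^ 2 * ∫ ω, |(∑ k ∈ range n, stepVariance μ F Y ω k) / s ^ 2 - 1| ∂μ := by
    rw [← integral_const_mul]
    refine integral_congr_ae (.of_forall fun ω ↦ ?_)
    dsimp only
    rw [← abs_of_pos (pow_pos hs 2), ← abs_mul, abs_of_pos (pow_pos hs 2)]
    congr 1
    field_simp
  simp only [Function.comp_def, inv_mul_eq_div, heatFlow_comp_div_sq f hs, hscale] at hbound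
  refine hbound.trans_eq ?_
  push_cast
  rw [norm_inv, Real.norm_of_nonneg hs.le]
  field_simp

theorem wassersteinDist_two_stdGaussian_le (h : IsMDS μ F n Y) (hM : 0 < M) (hs : 0 < s)
    (hY : ∀ k < n, ∀ᵐ ω ∂μ, |Y (k + 1) ω| ≤ M) :
    wassersteinDist 2 (μ.map fun ω ↦ (∑ k ∈ range n, Y (k + 1) ω) / s) stdGaussian ≤
      √(4 * (4 * M * √(s ^ 2 + M ^ 2) / s ^ 2 +
        ∫ ω, |(∑ k ∈ range n, stepVariance μ F Y ω k) / s ^ 2 - 1| ∂μ)) := by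
  have hX : MemLp (fun ω ↦ (∑ k ∈ range n, Y (k + 1) ω) / s) 2 μ := by
    simpa only [div_eq_mul_inv] using (h.memLp_sum le_rfl).mul_const s⁻¹
  have hXm := hX.aestronglyMeasurable.aemeasurable
  have := Measure.isProbabilityMeasure_map hXm
  have := nullSingletonClass_gaussianReal (μ := 0) one_ne_zero
  have := isOpenPosMeasure_stdGaussian
  refine wassersteinDist_two_le_sqrt (ν := γ)
    ((memLp_map_measure_iff aestronglyMeasurable_id hXm).2 hX)
    (memLp_id_gaussianReal' 2 ENNReal.ofNat_ne_top) fun f hf hK ↦ ?_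
  rw [integral_map hXm hf.continuous.aestronglyMeasurable]
  exact h.integral_comp_sum_div_sub_le hf hK hM hs hY

end IsMDS

/-- The `W₂` bound in the `L^∞` case. -/
theorem w2_bound_Linfty :
    ∃ C : ℝ, 0 < C ∧
      ∀ (Ω : Type) (m0 : MeasurableSpace Ω) (μ : Measure Ω), IsProbabilityMeasure μ →
      ∀ (F : ℕ → MeasurableSpace Ω) (n : ℕ) (Y : ℕ → Ω → ℝ) (sn : ℝ),
        1 ≤ n → IsMDS μ F n Y → 0 < sn →
        sn ^ 2 = ∑ i ∈ Finset.Icc 1 n, ∫ ω, (Y i ω) ^ 2 ∂μ →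
        (∀ i, 1 ≤ i → i ≤ n → eLpNorm (Y i) ⊤ μ < ⊤) →
        wassersteinDist 2 (μ.map fun ω => (∑ i ∈ Finset.Icc 1 n, Y i ω) / sn) stdGaussian ≤
          C * ((n : ℝ) ^ ((1 : ℝ) / 4) / sn * (((Finset.Icc 1 n).sup fun i => eLpNorm (Y i) ⊤ μ).toReal) + rnorm μ 1 (fun ω => (∑ i ∈ Finset.Icc 1 n, (μ[fun ω' => (Y i ω') ^ 2 | F (i - 1)]) ω) / sn ^ 2 - 1) ^ ((1 : ℝ) / 2)) := by
  refine ⟨5, by norm_num, fun Ω _ μ _ F n Y s hn h hs hsn hfin ↦ ?_⟩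
  set M := ((Finset.Icc 1 n).sup fun i => eLpNorm (Y i) ⊤ μ).toReal
  have hY (i) (hi : i ∈ Finset.Icc 1 n) : ∀ᵐ ω ∂μ, |Y i ω| ≤ M :=
    ae_abs_le_sup_eLpNorm_top
      (fun j hj ↦ hfin j (Finset.mem_Icc.1 hj).1 (Finset.mem_Icc.1 hj).2) hi
  have hsM : s ^ 2 ≤ n * M ^ 2 := by
    rw [hsn]
    simpa using Finset.sum_le_card_nsmul _ _ _ fun i hi ↦ integral_sq_le_sq_of_ae_abs_le (hY i hi)
  have hM : 0 < M := by
    refine lt_of_le_of_ne ENNReal.toReal_nonneg fun hM₀ ↦ ?_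
    rw [← hM₀] at hsM
    nlinarith
  have hshift (a : ℕ → ℝ) : ∑ i ∈ Finset.Icc 1 n, a i = ∑ k ∈ Finset.range n, a (k + 1) := by
    rw [Finset.range_eq_Ico, Finset.sum_Ico_add' a 0 n 1]
    rfl
  have hW := h.wassersteinDist_two_stdGaussian_le hM hs fun k hk ↦
    hY (k + 1) (Finset.mem_Icc.2 ⟨Nat.le_add_left 1 k, hk⟩)
  simp only [hshift, rnorm, rpow_one, div_one, Nat.add_sub_cancel]
  exact hW.trans (sqrt_lindeberg_bound_le hM hs (integral_nonneg fun _ ↦ abs_nonneg _)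
    (Nat.one_le_cast.2 hn) hsM)
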